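/- arXiv:2012.01958 — 6 statements merged into one kernel-verified Lean document; each statement's English description precedes it below -/
import Mathlib

section
/- Fix integers n ≥ 1, d ≥ 1 and natural numbers α_0,…,α_n. For every integer t ≥ 1 and every vector a = (a_0,…,a_n) ∈ ℕ^{n+1} with a_0+⋯+a_n = t·d and d ∣ α_0a_0+⋯+α_na_n, there exist vectors h_1,…,h_t ∈ ℕ^{n+1} with h_1+⋯+h_t = a such that for every j the coordinates of h_j sum to d and d divides α_0(h_j)_0+⋯+α_n(h_j)_n. Equivalently, every Λ-invariant monomial of degree td is a product of t Λ-invariant monomials of degree d. -/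
/-! The monomial with exponent vector `a` is invariant exactly when its weight `a.weight α`, read in
`ZMod d`, vanishes. By the Erdős–Ginzburg–Ziv theorem, among any `2 * d - 1` elements of `ZMod d`
there are `d` whose sum is zero. Applied to the weights of the variables of an invariant monomial of
degree `t * d` with `2 ≤ t`, listed with multiplicity, it yields an invariant divisor of degree `d`.
The quotient is an invariant monomial of degree `(t - 1) * d`, so one concludes by induction on `t`.
-/

section ZeroSum

variable {ι : Type*} {d : ℕ}

theorem exists_multiset_le_card_eq_sum_map_eq_zero (w : ι → ZMod d) (s : Multiset ι)
    (hs : 2 * d - 1 ≤ s.card) : ∃ u ≤ s, u.card = d ∧ (u.map w).sum = 0 := by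
  obtain ⟨v, hv, hcard, hsum⟩ := ZMod.erdos_ginzburg_ziv_multiset (s.map w) (by simpa using hs)
  have hmem : v ∈ (s.powersetCard d).map (Multiset.map w) :=
    Multiset.powersetCard_map w d s ▸ Multiset.mem_powersetCard.2 ⟨hv, hcard⟩
  obtain ⟨u, hu, rfl⟩ := Multiset.mem_map.1 hmem
  obtain ⟨hus, hucard⟩ := Multiset.mem_powersetCard.1 hu
  exact ⟨u, hus, hucard, hsum⟩

theorem card_toMultiset_eq_degree (a : ι →₀ ℕ) : a.toMultiset.card = a.degree :=
  a.card_toMultiset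

theorem sum_map_toMultiset_eq_weight {M : Type*} [AddCommMonoid M] (w : ι → M) (a : ι →₀ ℕ) :
    (a.toMultiset.map w).sum = a.weight w := by
  rw [Finsupp.toMultiset_map, Finsupp.sum_toMultiset, Finsupp.weight_apply,
    Finsupp.sum_mapDomain_index (by simp) fun _ _ _ ↦ add_smul _ _ _]

theorem exists_finsupp_le_degree_eq_weight_eq_zero (w : ι → ZMod d) (a : ι →₀ ℕ)
    (ha : 2 * d - 1 ≤ a.degree) : ∃ g ≤ a, g.degree = d ∧ g.weight w = 0 := by
  classical
  obtain ⟨u, hua, hcard, hsum⟩ := exists_multiset_le_card_eq_sum_map_eq_zero w a.toMultiset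
    (by rwa [card_toMultiset_eq_degree])
  refine ⟨u.toFinsupp, ?_, ?_, ?_⟩
  · rwa [← Finsupp.orderIsoMultiset.le_iff_le, Finsupp.coe_orderIsoMultiset,
      Multiset.toFinsupp_toMultiset]
  · rwa [← card_toMultiset_eq_degree, Multiset.toFinsupp_toMultiset]
  · rwa [← sum_map_toMultiset_eq_weight, Multiset.toFinsupp_toMultiset]

theorem weight_natCast_eq_zero_iff_dvd [Fintype ι] (α : ι → ℕ) (a : ι →₀ ℕ) :
    a.weight (fun i ↦ (α i : ZMod d)) = 0 ↔ d ∣ ∑ i, α i * a i := by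
  simp [Finsupp.weight_eq_sum, ← ZMod.natCast_eq_zero_iff, mul_comm]

theorem stmt0_general (w : ι → ZMod d) (t : ℕ) (a : ι →₀ ℕ) (hdeg : a.degree = t * d)
    (hw : a.weight w = 0) :
    ∃ h : Fin t → ι →₀ ℕ, ∑ j, h j = a ∧ ∀ j, (h j).degree = d ∧ (h j).weight w = 0 := by
  induction t generalizing a with
  | zero =>
    have ha : a = 0 := by simpa [Finsupp.degree_eq_zero_iff] using hdeg
    exact ⟨Fin.elim0, by simp [ha], fun j ↦ j.elim0⟩
  | succ t ih =>
    obtain ⟨g, hga, hgdeg, hgw⟩ : ∃ g ≤ a, g.degree = d ∧ g.weight w = 0 := by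
      rcases t.eq_zero_or_pos with rfl | ht
      · exact ⟨a, le_rfl, by simpa using hdeg, hw⟩
      · have hle : 2 * d ≤ (t + 1) * d := Nat.mul_le_mul_right d (by lia)
        exact exists_finsupp_le_degree_eq_weight_eq_zero w a (by lia)
    obtain ⟨b, rfl⟩ := exists_add_of_le hga
    have hbdeg : b.degree = t * d := by rw [map_add] at hdeg; lia
    have hbw : b.weight w = 0 := by simpa [hgw] using hw
    obtain ⟨h, hsum, hh⟩ := ih b hbdeg hbw
    exact ⟨Fin.cons g h, by simp [Fin.sum_univ_succ, hsum], Fin.cases ⟨hgdeg, hgw⟩ hh⟩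

end ZeroSum

/-- Every Λ-invariant monomial of degree t·d is a product of t Λ-invariant
monomials of degree d (Theorem 3.1 of the paper, exponent-vector form). -/
theorem stmt0 (n d : ℕ) (hn : 1 ≤ n) (hd : 1 ≤ d) (α : Fin (n + 1) → ℕ)
    (t : ℕ) (ht : 1 ≤ t) (a : Fin (n + 1) → ℕ)
    (hsum : ∑ i, a i = t * d) (hdiv : d ∣ ∑ i, α i * a i) :
    ∃ h : Fin t → (Fin (n + 1) → ℕ),
      (∑ j, h j) = a ∧
      ∀ j : Fin t, (∑ i, h j i = d) ∧ d ∣ ∑ i, α i * h j i := by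
  obtain ⟨h, hsum_h, hh⟩ := stmt0_general (fun i ↦ (α i : ZMod d)) t
    (Finsupp.equivFunOnFinite.symm a) (by simpa [Finsupp.degree_eq_sum] using hsum)
    ((weight_natCast_eq_zero_iff_dvd α _).2 hdiv)
  exact ⟨fun j ↦ h j, by simpa using congrArg DFunLike.coe hsum_h,
    by simpa only [Finsupp.degree_eq_sum, weight_natCast_eq_zero_iff_dvd] using hh⟩
end

section
/- Let d ≥ 2, let e ∈ ℂ be a primitive d-th root of unity, α_0,…,α_n ∈ ℕ, and let I_d ⊆ ℂ[x_0,…,x_n] be the ideal generated by all monomials x^a with |a| = d and d ∣ ⟨α,a⟩. Then the polynomial p = ∏_{j=1}^{d−1}(e^{jα_0}x_0 + ⋯ + e^{jα_n}x_n) is nonzero and does not belong to I_d, while (x_0+⋯+x_n)·p belongs to I_d. In particular, multiplication by the linear form x_0+⋯+x_n from the degree d−1 part to the degree d part of ℂ[x_0,…,x_n]/I_d is not injective. -/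
open MvPolynomial

/-!
Write `L_j = ∑ i, e ^ (j α_i) x_i`. The substitution `x_i ↦ e ^ α_i x_i` sends `L_j` to `L_{j+1}`,
and `L_d = L_0`, so it permutes the factors of `L_0 L_1 ⋯ L_{d-1} = (∑ i, x_i) p` cyclically and
fixes their product. As it multiplies `x^a` by `e ^ ⟨α, a⟩`, every monomial of that product
satisfies `d ∣ ⟨α, a⟩`, which puts the product in `I_d`. The factor `p` itself is nonzero of degree
`d - 1`, whereas `I_d` is generated in degree `d`.
-/

section DiagonalScale

variable {σ R : Type*} [CommSemiring R]

/-- The substitution `x_i ↦ c_i x_i`, i.e. the action of the diagonal matrix with entries `c` on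
polynomials; for `c_i = e ^ α_i` it generates the cyclic group `Λ`. -/
noncomputable def diagonalScale (c : σ → R) : MvPolynomial σ R →ₐ[R] MvPolynomial σ R :=
  aeval fun i => C (c i) * X i

theorem diagonalScale_monomial (c : σ → R) (u : σ →₀ ℕ) (r : R) :
    diagonalScale c (monomial u r) = monomial u ((u.prod fun i k => c i ^ k) * r) := by
  simp only [diagonalScale, aeval_monomial, mul_pow, Finsupp.prod_mul, algebraMap_eq]
  rw [monomial_eq, C_mul, map_finsuppProd]
  simp only [C_pow]
  ring

theorem coeff_diagonalScale (c : σ → R) (f : MvPolynomial σ R) (a : σ →₀ ℕ) :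
    coeff a (diagonalScale c f) = (a.prod fun i k => c i ^ k) * coeff a f := by
  classical
  induction f using MvPolynomial.induction_on' with
  | monomial u r =>
    rw [diagonalScale_monomial, coeff_monomial, coeff_monomial]
    split_ifs with h
    · rw [h]
    · rw [mul_zero]
  | add p q hp hq => rw [map_add, coeff_add, coeff_add, hp, hq, mul_add]

theorem dvd_weight_of_diagonalScale_eq_self [IsCancelMulZero R] {d : ℕ} {e : R}
    (he : IsPrimitiveRoot e d) {α : σ → ℕ} {f : MvPolynomial σ R}
    (hf : diagonalScale (fun i => e ^ α i) f = f) {a : σ →₀ ℕ} (ha : a ∈ f.support) :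
    d ∣ Finsupp.weight α a := by
  have hcoeff : (a.prod fun i k => (e ^ α i) ^ k) * coeff a f = coeff a f := by
    rw [← coeff_diagonalScale, hf]
  have hpow : e ^ Finsupp.weight α a = a.prod fun i k => (e ^ α i) ^ k := by
    simp only [Finsupp.weight_apply, Finsupp.sum, Finsupp.prod, smul_eq_mul, mul_comm,
      ← pow_mul, Finset.prod_pow_eq_pow_sum]
  exact he.dvd_of_pow_eq_one _ <| hpow.trans <|
    (mul_eq_right₀ (mem_support_iff.1 ha)).1 hcoeff

end DiagonalScale

section TwistedForm

variable {σ R : Type*} [Fintype σ] [CommSemiring R]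

/-- The linear form `∑ i, e ^ (j α_i) x_i`: the image of `∑ i, x_i` under the `j`-th power of the
substitution `x_i ↦ e ^ α_i x_i`. -/
noncomputable def twistedForm (e : R) (α : σ → ℕ) (j : ℕ) : MvPolynomial σ R :=
  ∑ i, C (e ^ (j * α i)) * X i

theorem twistedForm_zero (e : R) (α : σ → ℕ) : twistedForm e α 0 = ∑ i, X i := by
  simp [twistedForm]

theorem twistedForm_eq_sum_X_of_pow_eq_one {d : ℕ} {e : R} (he : e ^ d = 1) (α : σ → ℕ) :
    twistedForm e α d = ∑ i, X i := by
  simp [twistedForm, pow_mul, he]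

theorem diagonalScale_twistedForm (e : R) (α : σ → ℕ) (j : ℕ) :
    diagonalScale (fun i => e ^ α i) (twistedForm e α j) = twistedForm e α (j + 1) := by
  simp only [twistedForm, diagonalScale, map_sum, map_mul, aeval_X, algHom_C, algebraMap_eq,
    ← mul_assoc, ← C_mul, ← pow_add, add_mul, one_mul]

theorem isHomogeneous_twistedForm (e : R) (α : σ → ℕ) (j : ℕ) :
    (twistedForm e α j).IsHomogeneous 1 :=
  IsHomogeneous.sum _ _ _ fun i _ => isHomogeneous_C_mul_X _ i

theorem isHomogeneous_prod_twistedForm (e : R) (α : σ → ℕ) (s : Finset ℕ) :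
    (∏ j ∈ s, twistedForm e α j).IsHomogeneous s.card := by
  simpa using IsHomogeneous.prod s (twistedForm e α) (fun _ => 1)
    fun j _ => isHomogeneous_twistedForm e α j

theorem prod_twistedForm_ne_zero [Nonempty σ] [Nontrivial R] {e : R} (he : IsUnit e)
    (α : σ → ℕ) (s : Finset ℕ) : ∏ j ∈ s, twistedForm e α j ≠ 0 := by
  classical
  obtain ⟨i⟩ := ‹Nonempty σ›
  have heval : eval (Pi.single i 1) (∏ j ∈ s, twistedForm e α j) = ∏ j ∈ s, e ^ (j * α i) := by
    simp [twistedForm, Pi.single_apply, map_prod]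
  have hunit : IsUnit (∏ j ∈ s, e ^ (j * α i)) := by
    rw [Finset.prod_pow_eq_pow_sum]
    exact he.pow _
  intro h
  rw [h, map_zero] at heval
  exact hunit.ne_zero heval.symm

theorem sum_X_mul_prod_Icc_twistedForm {d : ℕ} (hd : d ≠ 0) (e : R) (α : σ → ℕ) :
    (∑ i, X i) * ∏ j ∈ Finset.Icc 1 (d - 1), twistedForm e α j =
      ∏ j ∈ Finset.range d, twistedForm e α j := by
  rw [Finset.range_eq_Ico, Finset.prod_eq_prod_Ico_succ_bot (Nat.pos_of_ne_zero hd),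
    twistedForm_zero, zero_add, Finset.Icc_sub_one_right_eq_Ico_of_not_isMin (by simpa using hd)]

theorem diagonalScale_prod_range_twistedForm {d : ℕ} {e : R} (he : e ^ d = 1) (α : σ → ℕ) :
    diagonalScale (fun i => e ^ α i) (∏ j ∈ Finset.range d, twistedForm e α j) =
      ∏ j ∈ Finset.range d, twistedForm e α j := by
  simp only [map_prod, diagonalScale_twistedForm]
  cases d with
  | zero => rfl
  | succ k =>
    rw [Finset.prod_range_succ, Finset.prod_range_succ', twistedForm_zero,
      twistedForm_eq_sum_X_of_pow_eq_one he]

end TwistedForm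

section InvariantMonomialIdeal

variable {σ R : Type*} [Fintype σ] [CommSemiring R]

variable (R) in
/-- The ideal `I_d` generated by the monomials `x^a` of degree `d` with `d ∣ ⟨α, a⟩`, that is, by
the degree-`d` monomials invariant under `x_i ↦ e ^ α_i x_i` for `e` a primitive `d`-th root of
unity. -/
noncomputable def invariantMonomialIdeal (d : ℕ) (α : σ → ℕ) : Ideal (MvPolynomial σ R) :=
  Ideal.span {q | ∃ a : σ → ℕ,
    (∑ i, a i = d) ∧ (d ∣ ∑ i, α i * a i) ∧ q = ∏ i, X i ^ a i}

theorem invariantMonomialIdeal_eq_span_monomial (d : ℕ) (α : σ → ℕ) :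
    invariantMonomialIdeal R d α = Ideal.span ((fun a => monomial a (1 : R)) ''
      {a : σ →₀ ℕ | a.degree = d ∧ d ∣ Finsupp.weight α a}) := by
  refine congrArg Ideal.span (Set.ext fun q => ?_)
  simp only [Set.mem_image, Set.mem_ofPred_eq, Finsupp.equivFunOnFinite.symm.exists_congr_left,
    Finsupp.degree_eq_sum, Finsupp.weight_eq_sum, smul_eq_mul, mul_comm, monomial_eq, C_1, one_mul,
    Finsupp.prod_pow, and_assoc, eq_comm (a := q)]
  rfl

theorem mem_invariantMonomialIdeal_iff {d : ℕ} {α : σ → ℕ} {f : MvPolynomial σ R} :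
    f ∈ invariantMonomialIdeal R d α ↔
      ∀ a ∈ f.support, ∃ b : σ →₀ ℕ, (b.degree = d ∧ d ∣ Finsupp.weight α b) ∧ b ≤ a := by
  rw [invariantMonomialIdeal_eq_span_monomial, mem_ideal_span_monomial_image]
  rfl

theorem notMem_invariantMonomialIdeal_of_isHomogeneous {d m : ℕ} {f : MvPolynomial σ R}
    (hf : f.IsHomogeneous m) (hf0 : f ≠ 0) (hmd : m < d) (α : σ → ℕ) :
    f ∉ invariantMonomialIdeal R d α := by
  intro hmem
  obtain ⟨a, ha⟩ := support_nonempty.2 hf0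
  obtain ⟨b, ⟨hb, -⟩, hba⟩ := mem_invariantMonomialIdeal_iff.1 hmem a ha
  have hdm : d ≤ m := calc
    d = b.degree := hb.symm
    _ ≤ a.degree := Finsupp.degree_mono hba
    _ = m := (hf.degree_eq_sum_deg_support ha).symm
  exact hmd.not_ge hdm

theorem mem_invariantMonomialIdeal_of_diagonalScale_eq_self [IsCancelMulZero R] {d : ℕ} {e : R}
    (he : IsPrimitiveRoot e d) {α : σ → ℕ} {f : MvPolynomial σ R} (hf : f.IsHomogeneous d)
    (hinv : diagonalScale (fun i => e ^ α i) f = f) : f ∈ invariantMonomialIdeal R d α :=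
  mem_invariantMonomialIdeal_iff.2 fun a ha =>
    ⟨a, ⟨(hf.degree_eq_sum_deg_support ha).symm, dvd_weight_of_diagonalScale_eq_self he hinv ha⟩,
      le_rfl⟩

end InvariantMonomialIdeal

theorem stmt3_general {σ R : Type*} [Fintype σ] [Nonempty σ] [CommSemiring R] [IsDomain R]
    {d : ℕ} (hd : d ≠ 0) {e : R} (he : IsPrimitiveRoot e d) (α : σ → ℕ) :
    let p := ∏ j ∈ Finset.Icc 1 (d - 1), twistedForm e α j
    p ≠ 0 ∧ p ∉ invariantMonomialIdeal R d α ∧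
      (∑ i, X i) * p ∈ invariantMonomialIdeal R d α := by
  intro p
  have hp : p ≠ 0 := prod_twistedForm_ne_zero (he.isUnit hd) α _
  have hpdeg : p.IsHomogeneous (d - 1) := by
    simpa using isHomogeneous_prod_twistedForm e α (Finset.Icc 1 (d - 1))
  have hprod : (∏ j ∈ Finset.range d, twistedForm e α j).IsHomogeneous d := by
    simpa using isHomogeneous_prod_twistedForm e α (Finset.range d)
  refine ⟨hp, notMem_invariantMonomialIdeal_of_isHomogeneous hpdeg hp (by omega) α, ?_⟩
  rw [sum_X_mul_prod_Icc_twistedForm hd]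
  exact mem_invariantMonomialIdeal_of_diagonalScale_eq_self he hprod
    (diagonalScale_prod_range_twistedForm he.pow_eq_one α)

/-- Corollary 3.5: the product p = ∏_{j=1}^{d−1}(e^{jα₀}x₀+⋯+e^{jαₙ}xₙ) is a nonzero
polynomial not in I_d, while (x₀+⋯+xₙ)·p ∈ I_d; hence multiplication by the linear
form x₀+⋯+xₙ on R/I_d is not injective from degree d−1 to degree d. -/
theorem stmt3 (n d : ℕ) (hn : 1 ≤ n) (hd : 2 ≤ d) (e : ℂ)
    (he : IsPrimitiveRoot e d) (α : Fin (n + 1) → ℕ) :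
    let I : Ideal (MvPolynomial (Fin (n + 1)) ℂ) :=
      Ideal.span { q : MvPolynomial (Fin (n + 1)) ℂ |
        ∃ a : Fin (n + 1) → ℕ,
          (∑ i, a i = d) ∧ (d ∣ ∑ i, α i * a i) ∧ q = ∏ i, X i ^ a i }
    let p : MvPolynomial (Fin (n + 1)) ℂ :=
      ∏ j ∈ Finset.Icc 1 (d - 1), (∑ i, C (e ^ (j * α i)) * X i)
    p ≠ 0 ∧ p ∉ I ∧ (∑ i, X i) * p ∈ I :=
  stmt3_general (by omega) he α
end

section
/- Fix an integer d ≥ 3 and integers a, b with 0 < a < b < d and gcd(a,b,d) = 1. Set g = gcd(a,d), a' = a/g, d' = d/g, and let λ be the unique integer with 0 < λ ≤ d' and b ≡ λ·a' (mod d'). Then for every t ≥ 1, #{(y₀,y₁,y₂) ∈ ℕ³ : y₀+y₁+y₂ = t·d and d ∣ a·y₁ + b·y₂} = #{(y₀,y₁,y₂) ∈ ℕ³ : y₀+y₁+y₂ = t·d, d' ∣ y₁ + λ·y₂, and y₁ + g·y₂ ≤ t·d}. -/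
/-!
If `d ∣ a * y₁ + b * y₂`, then `g = gcd(a, d)` divides `b * y₂`, hence divides `y₂` because `g` is
coprime to `b`. Writing `y₂ = g * z` and cancelling `g`, the condition becomes
`d' ∣ a' * y₁ + b * z`; since `b ≡ λ * a'` and `a'` is a unit modulo `d'`, this says
`d' ∣ y₁ + λ * z`. So multiplying the last exponent by `g` matches the reduced solutions with the
invariant monomials, and `y₁ + g * z ≤ N` is exactly the condition that leaves a nonnegative first
exponent in total degree `N`.
-/

section Divisibility

variable {g a b d lam y z : ℕ}

theorem dvd_mul_add_mul_iff_of_modEq (hcop : a.Coprime d) (hb : b ≡ lam * a [MOD d]) :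
    d ∣ a * y + b * z ↔ d ∣ y + lam * z := by
  have hmod : a * y + b * z ≡ a * (y + lam * z) [MOD d] := by
    calc a * y + b * z ≡ a * y + lam * a * z [MOD d] := (hb.mul_right z).add_left (a * y)
      _ = a * (y + lam * z) := by ring
  rw [hmod.dvd_iff dvd_rfl, hcop.symm.dvd_mul_left]

theorem mul_dvd_mul_add_mul_mul_iff (hg : 0 < g) :
    g * d ∣ g * a * y + b * (g * z) ↔ d ∣ a * y + b * z := by
  rw [show g * a * y + b * (g * z) = g * (a * y + b * z) by ring, Nat.mul_dvd_mul_iff_left hg]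

theorem dvd_of_mul_dvd_mul_add_mul (hgb : g.Coprime b) (h : g * d ∣ g * a * y + b * z) :
    g ∣ z := by
  have hbz : g ∣ b * z :=
    (Nat.dvd_add_right (dvd_mul_of_dvd_left (dvd_mul_right g a) y)).1 (dvd_of_mul_right_dvd h)
  exact hgb.dvd_of_dvd_mul_left hbz

end Divisibility

/-- Exponents `(y₀, y₁, y₂)` of the monomials of degree `N` invariant under
`diag(1, e ^ a, e ^ b)`, where `e` is a primitive `d`-th root of unity. -/
def invariantExponents (d a b N : ℕ) : Set (ℕ × ℕ × ℕ) :=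
  {y | y.1 + y.2.1 + y.2.2 = N ∧ d ∣ a * y.2.1 + b * y.2.2}

/-- Solutions of degree `N` of the reduced congruence `y₁ + lam * y₂ ≡ 0` modulo `d` which remain
of degree at most `N` when `y₂` is multiplied by `g`. -/
def reducedExponents (g d lam N : ℕ) : Set (ℕ × ℕ × ℕ) :=
  {y | y.1 + y.2.1 + y.2.2 = N ∧ d ∣ y.2.1 + lam * y.2.2 ∧ y.2.1 + g * y.2.2 ≤ N}

/-- Multiplication of the last exponent by `g`, the first exponent being adjusted to keep the
total degree equal to `N`. The subtraction truncates unless `y₁ + g * y₂ ≤ N`. -/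
def scaleLastExponent (g N : ℕ) (y : ℕ × ℕ × ℕ) : ℕ × ℕ × ℕ :=
  (N - (y.2.1 + g * y.2.2), y.2.1, g * y.2.2)

section Bijection

variable {g a b d lam N : ℕ}

theorem injOn_scaleLastExponent (hg : 0 < g) :
    Set.InjOn (scaleLastExponent g N) {y | y.1 + y.2.1 + y.2.2 = N} := by
  rintro ⟨x₀, x₁, x₂⟩ hx ⟨y₀, y₁, y₂⟩ hy hxy
  simp only [scaleLastExponent, Prod.mk.injEq, Set.mem_ofPred_eq] at hx hy hxy ⊢
  obtain ⟨-, h₁, hg₂⟩ := hxy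
  have h₂ : x₂ = y₂ := Nat.eq_of_mul_eq_mul_left hg hg₂
  exact ⟨by omega, h₁, h₂⟩

theorem mapsTo_scaleLastExponent (hg : 0 < g) (hcop : a.Coprime d)
    (hb : b ≡ lam * a [MOD d]) :
    Set.MapsTo (scaleLastExponent g N) (reducedExponents g d lam N)
      (invariantExponents (g * d) (g * a) b N) := by
  rintro ⟨y₀, y₁, y₂⟩ ⟨-, hdvd, hle⟩
  refine ⟨?_, (mul_dvd_mul_add_mul_mul_iff hg).2 ((dvd_mul_add_mul_iff_of_modEq hcop hb).2 hdvd)⟩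
  simpa only [scaleLastExponent, add_assoc] using Nat.sub_add_cancel hle

theorem surjOn_scaleLastExponent (hg : 0 < g) (hcop : a.Coprime d) (hgb : g.Coprime b)
    (hb : b ≡ lam * a [MOD d]) :
    Set.SurjOn (scaleLastExponent g N) (reducedExponents g d lam N)
      (invariantExponents (g * d) (g * a) b N) := by
  rintro ⟨y₀, y₁, y₂⟩ ⟨hsum, hdvd⟩
  obtain ⟨z, rfl⟩ : g ∣ y₂ := dvd_of_mul_dvd_mul_add_mul hgb hdvd
  have hz : z ≤ g * z := Nat.le_mul_of_pos_left z hg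
  have hred : d ∣ y₁ + lam * z :=
    (dvd_mul_add_mul_iff_of_modEq hcop hb).1 ((mul_dvd_mul_add_mul_mul_iff hg).1 hdvd)
  dsimp only at hsum
  refine ⟨(N - (y₁ + z), y₁, z), ⟨?_, hred, ?_⟩, ?_⟩
  · dsimp only
    omega
  · dsimp only
    omega
  · simp only [scaleLastExponent, Prod.mk.injEq, and_true]
    omega

theorem bijOn_scaleLastExponent (hg : 0 < g) (hcop : a.Coprime d) (hgb : g.Coprime b)
    (hb : b ≡ lam * a [MOD d]) :
    Set.BijOn (scaleLastExponent g N) (reducedExponents g d lam N)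
      (invariantExponents (g * d) (g * a) b N) :=
  ⟨mapsTo_scaleLastExponent hg hcop hb, (injOn_scaleLastExponent hg).mono fun _ hy => hy.1,
    surjOn_scaleLastExponent hg hcop hgb hb⟩

end Bijection

theorem stmt6_general {d a b lam : ℕ} (hg : 0 < a.gcd d) (hgcd : a.gcd (b.gcd d) = 1)
    (hlam : b ≡ lam * (a / a.gcd d) [MOD d / a.gcd d]) (N : ℕ) :
    (invariantExponents d a b N).ncard =
      (reducedExponents (a.gcd d) (d / a.gcd d) lam N).ncard := by
  have hcop : (a / a.gcd d).Coprime (d / a.gcd d) := Nat.coprime_div_gcd_div_gcd hg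
  have hgb : (a.gcd d).Coprime b := by
    rwa [Nat.Coprime, Nat.gcd_assoc, Nat.gcd_comm d b]
  have hbij := bijOn_scaleLastExponent (N := N) hg hcop hgb hlam
  rw [Nat.mul_div_cancel' (Nat.gcd_dvd_left a d), Nat.mul_div_cancel' (Nat.gcd_dvd_right a d)]
    at hbij
  exact hbij.ncard_eq.symm

/-- Lemma 4.9: the number of Λ-invariant monomials of degree t·d equals the number
of solutions of the reduced systems (**) satisfying y₁ + gcd(a,d)·y₂ ≤ t·d. -/
theorem stmt6 (d a b : ℕ) (hd : 3 ≤ d) (ha : 0 < a) (hab : a < b) (hbd : b < d)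
    (hgcd : Nat.gcd a (Nat.gcd b d) = 1)
    (lam : ℕ) (hlam0 : 0 < lam) (hlamle : lam ≤ d / Nat.gcd a d)
    (hlamcong : b ≡ lam * (a / Nat.gcd a d) [MOD d / Nat.gcd a d])
    (t : ℕ) (ht : 1 ≤ t) :
    Set.ncard {y : ℕ × ℕ × ℕ |
        y.1 + y.2.1 + y.2.2 = t * d ∧ d ∣ a * y.2.1 + b * y.2.2} =
      Set.ncard {y : ℕ × ℕ × ℕ |
        y.1 + y.2.1 + y.2.2 = t * d ∧
        (d / Nat.gcd a d) ∣ y.2.1 + lam * y.2.2 ∧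
        y.2.1 + Nat.gcd a d * y.2.2 ≤ t * d} :=
  stmt6_general (Nat.gcd_pos_of_pos_left d ha) hgcd hlamcong (t * d)
end

section
/- Fix an integer d ≥ 3 and integers a, b with 0 < a < b < d and gcd(a,b,d) = 1. Set g = gcd(a,d), a' = a/g, d' = d/g, let λ be the unique integer with 0 < λ ≤ d' and b ≡ λ·a' (mod d'), and put θ = g + gcd(λ, d') + gcd(λ − g, d') (the last gcd taken of integers, nonnegative). Then for every t ≥ 0, 2 · #{(y₀,y₁,y₂) ∈ ℕ³ : y₀+y₁+y₂ = t·d and d ∣ a·y₁ + b·y₂} = d·t² + θ·t + 2. -/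
/-!
An invariant monomial of degree `n = t * d` is a point `(y₁, y₂)` of the lattice
`L = {d ∣ a * y₁ + b * y₂}` in the triangle with vertices `(0, 0)`, `(n, 0)`, `(0, n)`. Since
`L` contains `(n, n)`, the point reflection of the square `[0, n]²` in its centre preserves `L` and
swaps this triangle with the complementary one, so twice the count is the count in the square plus
the count on the diagonal. Fibre by fibre these are counts of solutions of one linear congruence.
The triangle has `t * gcd(a, d)`, `t * gcd(b, d)` and `t * gcd(b - a, d)` lattice steps on its three
edges, and `gcd(a, b, d) = 1` turns the last two gcds into `gcd(λ, d')` and `gcd(λ - g, d')`.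
-/

open Finset

section Reflection

/-- The lattice points of the triangle with vertices `(0, 0)`, `(n, 0)`, `(0, n)`, i.e. the
exponents `(y₁, y₂)` of the monomials `x₀ ^ y₀ * x₁ ^ y₁ * x₂ ^ y₂` of degree `n`. -/
def latticeTriangle (n : ℕ) : Finset (ℕ × ℕ) :=
  {p ∈ range (n + 1) ×ˢ range (n + 1) | p.1 + p.2 ≤ n}

theorem mem_latticeTriangle {n : ℕ} {p : ℕ × ℕ} : p ∈ latticeTriangle n ↔ p.1 + p.2 ≤ n := by
  simp only [latticeTriangle, mem_filter, mem_product, mem_range]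
  omega

variable (n : ℕ) (P : ℕ × ℕ → Prop) [DecidablePred P]

theorem ncard_setOf_add_add_eq_and :
    {y : ℕ × ℕ × ℕ | y.1 + y.2.1 + y.2.2 = n ∧ P y.2}.ncard =
      #{p ∈ latticeTriangle n | P p} := by
  rw [← Set.ncard_coe_finset]
  refine Set.ncard_congr (fun y _ ↦ y.2) ?_ ?_ ?_
  · rintro ⟨x, p⟩ ⟨hsum, hp⟩
    rw [mem_coe, mem_filter, mem_latticeTriangle]
    exact ⟨by omega, hp⟩
  · rintro ⟨x, p⟩ ⟨x', p'⟩ ⟨hsum, -⟩ ⟨hsum', -⟩ rfl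
    dsimp only at hsum hsum'
    rw [Prod.mk.injEq]
    exact ⟨by omega, rfl⟩
  · intro p hp
    rw [mem_coe, mem_filter, mem_latticeTriangle] at hp
    exact ⟨(n - (p.1 + p.2), p), ⟨by dsimp only; omega, hp.2⟩, rfl⟩

variable {n P}

theorem card_filter_range_succ_product :
    #{p ∈ range (n + 1) ×ˢ range (n + 1) | P p} =
      #{p ∈ range n ×ˢ range n | P p} + #{x ∈ range n | P (x, n)} + #{y ∈ range n | P (n, y)} +
        if P (n, n) then 1 else 0 := by
  simp only [card_filter, sum_product, sum_range_succ, sum_add_distrib]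
  ring

theorem card_filter_latticeTriangle_eq_card_filter_le_add
    (hP : ∀ p : ℕ × ℕ, p.1 ≤ n → p.2 ≤ n → P p → P (n - p.1, n - p.2)) :
    #{p ∈ latticeTriangle n | P p} =
      #{p ∈ range (n + 1) ×ˢ range (n + 1) | P p ∧ n ≤ p.1 + p.2} := by
  refine card_nbij' (fun p ↦ (n - p.1, n - p.2)) (fun p ↦ (n - p.1, n - p.2)) ?_ ?_ ?_ ?_ <;>
    rintro ⟨x, y⟩ h <;>
    simp only [coe_filter, mem_latticeTriangle, mem_product, mem_range, Set.mem_ofPred_eq,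
      Prod.mk.injEq] at h ⊢
  · exact ⟨by omega, hP _ (by grind) (by grind) h.2, by omega⟩
  · exact ⟨by omega, hP _ (by grind) (by grind) h.2.1⟩
  · omega
  · omega

theorem two_mul_card_filter_latticeTriangle
    (hP : ∀ p : ℕ × ℕ, p.1 ≤ n → p.2 ≤ n → P p → P (n - p.1, n - p.2)) :
    2 * #{p ∈ latticeTriangle n | P p} =
      #{p ∈ range (n + 1) ×ˢ range (n + 1) | P p} + #{p ∈ antidiagonal n | P p} := by
  have hunion : {p ∈ latticeTriangle n | P p} ∪
      {p ∈ range (n + 1) ×ˢ range (n + 1) | P p ∧ n ≤ p.1 + p.2} =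
        {p ∈ range (n + 1) ×ˢ range (n + 1) | P p} := by
    ext p
    simp only [mem_union, mem_filter, mem_latticeTriangle, mem_product, mem_range]
    grind
  have hinter : {p ∈ latticeTriangle n | P p} ∩
      {p ∈ range (n + 1) ×ˢ range (n + 1) | P p ∧ n ≤ p.1 + p.2} =
        {p ∈ antidiagonal n | P p} := by
    ext p
    simp only [mem_inter, mem_filter, mem_latticeTriangle, mem_product, mem_range,
      HasAntidiagonal.mem_antidiagonal]
    grind
  rw [← hunion, ← hinter, card_union_add_card_inter, two_mul,
    ← card_filter_latticeTriangle_eq_card_filter_le_add hP]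

end Reflection

section LinearCongruence

theorem mul_modEq_mul_iff_modEq_div_gcd {m : ℤ} (hm : 0 < m) (k x y : ℤ) :
    k * x ≡ k * y [ZMOD m] ↔ x ≡ y [ZMOD m / Int.gcd m k] := by
  refine ⟨Int.ModEq.cancel_left_div_gcd hm, fun h ↦ (h.mul_left' (c := k)).of_dvd ?_⟩
  calc m = Int.gcd m k * (m / Int.gcd m k) :=
        (Int.mul_ediv_cancel' (Int.gcd_dvd_left m k)).symm
    _ ∣ k * (m / Int.gcd m k) := mul_dvd_mul_right (Int.gcd_dvd_right m k) _

theorem exists_nat_dvd_add_mul {d : ℕ} (hd : 0 < d) {c k : ℤ} (h : (Int.gcd k d : ℤ) ∣ c) :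
    ∃ v : ℕ, (d : ℤ) ∣ c + k * v := by
  obtain ⟨q, hq⟩ := h
  obtain ⟨v, -, hv⟩ := Int.existsUnique_equiv_nat (-(Int.gcdA k d * q)) (Int.natCast_pos.mpr hd)
  refine ⟨v, (((hv.mul_left k).add_left c).dvd_iff).mpr ⟨Int.gcdB k d * q, ?_⟩⟩
  rw [hq, Int.gcd_eq_gcd_ab]
  ring

theorem card_filter_dvd_add_mul {d : ℕ} (hd : 0 < d) (c k : ℤ) (t : ℕ) :
    #{x ∈ range (t * d) | (d : ℤ) ∣ c + k * (x : ℕ)} =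
      if (Int.gcd k d : ℤ) ∣ c then t * Int.gcd k d else 0 := by
  have hgd : Int.gcd k d ∣ d := Int.natCast_dvd_natCast.mp (Int.gcd_dvd_right k d)
  split_ifs with hc
  · obtain ⟨v, hv⟩ := exists_nat_dvd_add_mul hd hc
    have hiff : ∀ x : ℕ, (d : ℤ) ∣ c + k * x ↔ x ≡ v [MOD d / Int.gcd k d] := fun x ↦ by
      rw [← Int.natCast_modEq_iff, Int.natCast_div, Int.gcd_comm,
        ← mul_modEq_mul_iff_modEq_div_gcd (by exact_mod_cast hd), Int.modEq_comm,
        Int.modEq_iff_dvd, ← add_sub_add_left_eq_sub _ _ c, dvd_sub_left hv]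
    have hpos : 0 < d / Int.gcd k d :=
      Nat.div_pos (Nat.le_of_dvd hd hgd) (Nat.pos_of_dvd_of_pos hgd hd)
    have hlen : t * d = t * Int.gcd k d * (d / Int.gcd k d) := by
      rw [mul_assoc, Nat.mul_div_cancel' hgd]
    rw [filter_congr fun x _ ↦ hiff x, ← Nat.count_eq_card_filter_range,
      Nat.count_modEq_card _ hpos, hlen]
    simp [hpos]
  · refine card_filter_eq_zero_iff.mpr fun x _ hx ↦ hc ?_
    exact (dvd_add_left ((Int.gcd_dvd_left k d).mul_right _)).mp
      ((Int.natCast_dvd_natCast.mpr hgd).trans hx)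

theorem card_filter_dvd_add_mul_of_dvd {d : ℕ} (hd : 0 < d) {c : ℤ} (hc : (d : ℤ) ∣ c) (k : ℤ)
    (t : ℕ) : #{x ∈ range (t * d) | (d : ℤ) ∣ c + k * (x : ℕ)} = t * Int.gcd k d := by
  rw [card_filter_dvd_add_mul hd, if_pos ((Int.gcd_dvd_right k d).trans hc)]

end LinearCongruence

theorem card_filter_dvd_square {d : ℕ} (hd : 0 < d) (a b : ℤ) (t : ℕ) :
    #{p ∈ range (t * d) ×ˢ range (t * d) | (d : ℤ) ∣ a * p.1 + b * p.2} =
      d * Int.gcd a (Int.gcd b d) * t ^ 2 := by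
  obtain ⟨e, he⟩ : Int.gcd b d ∣ d :=
    Int.natCast_dvd_natCast.mp (Int.gcd_dvd_right b d)
  have hg : 0 < Int.gcd b d := Int.gcd_pos_of_ne_zero_right _ (by exact_mod_cast hd.ne')
  have hlen : t * d = t * e * Int.gcd b d := by rw [mul_assoc, mul_comm e, ← he]
  calc #{p ∈ range (t * d) ×ˢ range (t * d) | (d : ℤ) ∣ a * p.1 + b * p.2}
      = ∑ x ∈ range (t * d), #{y ∈ range (t * d) | (d : ℤ) ∣ a * x + b * (y : ℕ)} := by
        simp only [card_filter, sum_product]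
    _ = ∑ x ∈ range (t * d), if (Int.gcd b d : ℤ) ∣ a * x then t * Int.gcd b d else 0 := by
        simp only [card_filter_dvd_add_mul hd]
    _ = #{x ∈ range (t * d) | (Int.gcd b d : ℤ) ∣ 0 + a * (x : ℕ)} * (t * Int.gcd b d) := by
        rw [← sum_filter, sum_const, smul_eq_mul]
        simp only [zero_add]
    _ = t * e * Int.gcd a (Int.gcd b d) * (t * Int.gcd b d) := by
        rw [hlen, card_filter_dvd_add_mul_of_dvd hg (dvd_zero _)]
    _ = Int.gcd b d * e * Int.gcd a (Int.gcd b d) * t ^ 2 := by ring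
    _ = d * Int.gcd a (Int.gcd b d) * t ^ 2 := by rw [← he]

theorem card_filter_dvd_closed_square {d : ℕ} (hd : 0 < d) (a b : ℤ) (t : ℕ) :
    #{p ∈ range (t * d + 1) ×ˢ range (t * d + 1) | (d : ℤ) ∣ a * p.1 + b * p.2} =
      d * Int.gcd a (Int.gcd b d) * t ^ 2 + (Int.gcd a d + Int.gcd b d) * t + 1 := by
  have hn : (d : ℤ) ∣ (t * d : ℕ) := Int.natCast_dvd_natCast.mpr (dvd_mul_left d t)
  have hedge : #{x ∈ range (t * d) | (d : ℤ) ∣ a * (x : ℕ) + b * (t * d : ℕ)} =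
      t * Int.gcd a d := by
    simp only [add_comm (a * _), card_filter_dvd_add_mul_of_dvd hd (hn.mul_left b)]
  have hedge' : #{y ∈ range (t * d) | (d : ℤ) ∣ a * (t * d : ℕ) + b * (y : ℕ)} =
      t * Int.gcd b d :=
    card_filter_dvd_add_mul_of_dvd hd (hn.mul_left a) b t
  rw [card_filter_range_succ_product, card_filter_dvd_square hd, hedge, hedge',
    if_pos (dvd_add (hn.mul_left a) (hn.mul_left b))]
  ring

theorem card_filter_dvd_antidiagonal {d : ℕ} (hd : 0 < d) (a b : ℤ) (t : ℕ) :
    #{p ∈ antidiagonal (t * d) | (d : ℤ) ∣ a * (p.1 : ℕ) + b * (p.2 : ℕ)} =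
      Int.gcd (b - a) d * t + 1 := by
  have hn : (d : ℤ) ∣ (t * d : ℕ) := Int.natCast_dvd_natCast.mpr (dvd_mul_left d t)
  calc #{p ∈ antidiagonal (t * d) | (d : ℤ) ∣ a * (p.1 : ℕ) + b * (p.2 : ℕ)}
      = #{x ∈ range (t * d + 1) | (d : ℤ) ∣ a * (x : ℕ) + b * (t * d - x : ℕ)} := by
        simp only [card_filter, Nat.sum_antidiagonal_eq_sum_range_succ_mk]
    _ = #{x ∈ range (t * d + 1) | (d : ℤ) ∣ b * (t * d : ℕ) + (a - b) * (x : ℕ)} := by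
        refine congrArg card (filter_congr fun x hx ↦ ?_)
        rw [Nat.cast_sub (mem_range_succ_iff.mp hx)]
        ring_nf
    _ = t * Int.gcd (a - b) d + 1 := by
        rw [range_add_one, filter_insert, if_pos (dvd_add (hn.mul_left b) (hn.mul_left _)),
          card_insert_of_notMem (by simp), card_filter_dvd_add_mul_of_dvd hd (hn.mul_left b)]
    _ = Int.gcd (b - a) d * t + 1 := by rw [← neg_sub b a, Int.neg_gcd, mul_comm]

theorem two_mul_card_filter_dvd_latticeTriangle {d : ℕ} (hd : 0 < d) (a b : ℤ) (t : ℕ) :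
    2 * #{p ∈ latticeTriangle (t * d) | (d : ℤ) ∣ a * p.1 + b * p.2} =
      d * Int.gcd a (Int.gcd b d) * t ^ 2 +
        (Int.gcd a d + Int.gcd b d + Int.gcd (b - a) d) * t + 2 := by
  have hreflect (p : ℕ × ℕ) (h₁ : p.1 ≤ t * d) (h₂ : p.2 ≤ t * d)
      (hp : (d : ℤ) ∣ a * p.1 + b * p.2) :
      (d : ℤ) ∣ a * (t * d - p.1 : ℕ) + b * (t * d - p.2 : ℕ) := by
    rw [← dvd_add_right hp, Nat.cast_sub h₁, Nat.cast_sub h₂]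
    exact ⟨(a + b) * t, by push_cast; ring⟩
  rw [two_mul_card_filter_latticeTriangle hreflect, card_filter_dvd_closed_square hd,
    card_filter_dvd_antidiagonal hd]
  ring

theorem gcd_div_gcd_eq_gcd_of_modEq_mul {d : ℕ} (hd : 0 < d) {a b l : ℤ}
    (hgcd : Int.gcd a (Int.gcd b d) = 1)
    (hl : b ≡ l * (a / Int.gcd a d) [ZMOD (d / Int.gcd a d : ℕ)]) :
    Int.gcd l (d / Int.gcd a d : ℕ) = Int.gcd b d := by
  have hd' : (Int.gcd a d : ℤ) * (d / Int.gcd a d : ℕ) = d := by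
    exact_mod_cast Nat.mul_div_cancel' (Int.natCast_dvd_natCast.mp (Int.gcd_dvd_right a d))
  have hunit : Int.gcd (a / Int.gcd a d) (d / Int.gcd a d : ℕ) = 1 := by
    rw [Int.natCast_div]
    exact Int.gcd_ediv_gcd_ediv_gcd_of_ne_zero_right (by exact_mod_cast hd.ne')
  have hcop : Int.gcd b (Int.gcd a d) = 1 := by
    rw [← hgcd, ← Int.gcd_assoc, ← Int.gcd_assoc, Int.gcd_comm a b]
  calc Int.gcd l (d / Int.gcd a d : ℕ)
      = Int.gcd (l * (a / Int.gcd a d)) (d / Int.gcd a d : ℕ) :=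
        (Int.gcd_mul_left_left_of_gcd_eq_one hunit).symm
    _ = Int.gcd b (d / Int.gcd a d : ℕ) := by rw [← Int.gcd_emod, ← hl, Int.gcd_emod]
    _ = Int.gcd b (Int.gcd a d * (d / Int.gcd a d : ℕ)) :=
        (Int.gcd_mul_right_right_of_gcd_eq_one hcop).symm
    _ = Int.gcd b d := by rw [hd']

theorem stmt7_general {d : ℕ} (hd : 0 < d) {a b l : ℤ} (hgcd : Int.gcd a (Int.gcd b d) = 1)
    (hl : b ≡ l * (a / Int.gcd a d) [ZMOD (d / Int.gcd a d : ℕ)]) (t : ℕ) :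
    2 * Set.ncard {y : ℕ × ℕ × ℕ |
        y.1 + y.2.1 + y.2.2 = t * d ∧ (d : ℤ) ∣ a * y.2.1 + b * y.2.2} =
      d * t ^ 2 +
        (Int.gcd a d + Int.gcd l (d / Int.gcd a d : ℕ) +
          Int.gcd (l - Int.gcd a d) (d / Int.gcd a d : ℕ)) * t + 2 := by
  have hgcd_sub : Int.gcd a (Int.gcd (b - a) d) = 1 := by
    rw [← Int.gcd_assoc, Int.gcd_sub_self_right, Int.gcd_assoc, hgcd]
  have hl_sub : b - a ≡ (l - Int.gcd a d) * (a / Int.gcd a d) [ZMOD (d / Int.gcd a d : ℕ)] := by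
    rw [sub_mul, Int.mul_ediv_cancel' (Int.gcd_dvd_left a d)]
    exact hl.sub_right a
  rw [gcd_div_gcd_eq_gcd_of_modEq_mul hd hgcd hl,
    gcd_div_gcd_eq_gcd_of_modEq_mul hd hgcd_sub hl_sub,
    ncard_setOf_add_add_eq_and (t * d) (fun p ↦ (d : ℤ) ∣ a * p.1 + b * p.2),
    two_mul_card_filter_dvd_latticeTriangle hd, hgcd, mul_one]

/-- Theorem 4.11(i): the Hilbert function of the GT-surface X_d is
HF(X_d,t) = (d·t² + θ(a,b,d)·t + 2)/2, where
θ(a,b,d) = gcd(a,d) + gcd(λ,d') + gcd(λ−gcd(a,d),d'). -/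
theorem stmt7 (d a b : ℕ) (hd : 3 ≤ d) (ha : 0 < a) (hab : a < b) (hbd : b < d)
    (hgcd : Nat.gcd a (Nat.gcd b d) = 1)
    (lam : ℕ) (hlam0 : 0 < lam) (hlamle : lam ≤ d / Nat.gcd a d)
    (hlamcong : b ≡ lam * (a / Nat.gcd a d) [MOD d / Nat.gcd a d])
    (t : ℕ) :
    2 * Set.ncard {y : ℕ × ℕ × ℕ |
        y.1 + y.2.1 + y.2.2 = t * d ∧ d ∣ a * y.2.1 + b * y.2.2} =
      d * t ^ 2 +
        (Nat.gcd a d + Nat.gcd lam (d / Nat.gcd a d) +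
          Int.gcd ((lam : ℤ) - (Nat.gcd a d : ℤ)) ((d / Nat.gcd a d : ℕ) : ℤ)) * t + 2 := by
  exact_mod_cast stmt7_general (a := a) (b := b) (l := lam) (by omega) (by exact_mod_cast hgcd)
    (by exact_mod_cast Int.natCast_modEq_iff.mpr hlamcong) t
end

section
/- Let t ≥ 1 and let w ∈ ℕ³ have exactly one coordinate equal to zero, say w_k = 0 and w_i, w_j > 0 where {i,j,k} = {1,2,3}. Then w ∈ H_{3t} if and only if 3t ∣ w_i and 3t ∣ w_j. -/
/-- `HH t` is the submonoid H_{3t} of ℕ³ of the paper: `HH 1` = H₃ is generated by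
(3,0,0),(0,3,0),(0,0,3),(1,1,1); for t ≥ 2, H_{3t} is generated by (3t,0,0),(0,3t,0),
(0,0,3t) together with (1,1,1) + H_{3(t−1)}.  (Here `HH 0 = ⊥ = {0}`, so that the
t = 1 case of the recursion reproduces exactly H₃.) -/
def HH : ℕ → AddSubmonoid (Fin 3 → ℕ)
  | 0 => ⊥
  | (t + 1) => AddSubmonoid.closure
      ({Pi.single 0 (3 * (t + 1)), Pi.single 1 (3 * (t + 1)),
          Pi.single 2 (3 * (t + 1))} ∪
        (fun h => (fun _ => 1) + h) '' ((HH t : AddSubmonoid (Fin 3 → ℕ)) : Set (Fin 3 → ℕ)))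

/-- A sum in `N` vanishes only if both summands do, so a generator outside the kernel of `f` cannot
occur in an expression of an element of the kernel. -/
theorem mem_closure_union_iff_of_map_eq_zero {M N : Type*} [AddMonoid M] [AddCommMonoid N]
    [Subsingleton (AddUnits N)] (f : M →+ N) {A B : Set M} (hB : ∀ x ∈ B, f x ≠ 0)
    {w : M} (hw : f w = 0) :
    w ∈ AddSubmonoid.closure (A ∪ B) ↔ w ∈ AddSubmonoid.closure A := by
  refine ⟨fun hmem ↦ ?_, fun hmem ↦ AddSubmonoid.closure_mono Set.subset_union_left hmem⟩
  induction hmem using AddSubmonoid.closure_induction with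
  | mem x hx => exact AddSubmonoid.subset_closure (hx.resolve_right fun hxB ↦ hB x hxB hw)
  | zero => exact zero_mem _
  | add x y _ _ ihx ihy =>
    obtain ⟨hfx, hfy⟩ : f x = 0 ∧ f y = 0 := by rwa [map_add, add_eq_zero] at hw
    exact add_mem (ihx hfx) (ihy hfy)

theorem mem_closure_range_piSingle_iff {ι : Type*} [Finite ι] [DecidableEq ι] {M : ι → Type*}
    [∀ i, AddCommMonoid (M i)] (d : ∀ i, M i) {w : ∀ i, M i} :
    w ∈ AddSubmonoid.closure (Set.range fun i ↦ Pi.single i (d i)) ↔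
      ∀ i, w i ∈ AddSubmonoid.multiples (d i) := by
  cases nonempty_fintype ι
  have sum_eq (a : ι → ℕ) : ∑ i, a i • Pi.single i (d i) = fun i ↦ a i • d i := by
    simp only [← Pi.single_smul, Finset.univ_sum_single]
  simp only [AddSubmonoid.mem_closure_range_iff_of_fintype, sum_eq, eq_comm (a := w), funext_iff,
    AddSubmonoid.mem_multiples_iff, Classical.skolem]

theorem forall_fin_three_iff_of_ne {p : Fin 3 → Prop} {i j k : Fin 3}
    (hij : i ≠ j) (hik : i ≠ k) (hjk : j ≠ k) :
    (∀ l, p l) ↔ p i ∧ p j ∧ p k := by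
  refine ⟨fun h ↦ ⟨h i, h j, h k⟩, fun ⟨hi, hj, hk⟩ l ↦ ?_⟩
  obtain rfl | rfl | rfl : l = i ∨ l = j ∨ l = k := by lia
  exacts [hi, hj, hk]

theorem HH_succ (t : ℕ) :
    HH (t + 1) = AddSubmonoid.closure ((Set.range fun i ↦ Pi.single i (3 * (t + 1))) ∪
      (fun h ↦ (fun _ ↦ 1) + h) '' (HH t : Set (Fin 3 → ℕ))) := by
  have range_eq : (Set.range fun i : Fin 3 ↦ (Pi.single i (3 * (t + 1)) : Fin 3 → ℕ)) =
      {Pi.single 0 (3 * (t + 1)), Pi.single 1 (3 * (t + 1)), Pi.single 2 (3 * (t + 1))} := by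
    ext v
    simp [Fin.exists_fin_succ, eq_comm]
  rw [HH, range_eq]

theorem stmt12_general {t : ℕ} {w : Fin 3 → ℕ} {k : Fin 3} (hwk : w k = 0) :
    w ∈ HH t ↔ ∀ l, 3 * t ∣ w l := by
  cases t with
  | zero => simp [HH, funext_iff]
  | succ t =>
    have apply_ne_zero : ∀ v ∈ (fun h ↦ (fun _ ↦ 1) + h) '' (HH t : Set (Fin 3 → ℕ)),
        Pi.evalAddMonoidHom (fun _ ↦ ℕ) k v ≠ 0 := by
      rintro _ ⟨h, -, rfl⟩
      simp
    rw [HH_succ, mem_closure_union_iff_of_map_eq_zero _ apply_ne_zero hwk,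
      mem_closure_range_piSingle_iff]
    simp only [AddSubmonoid.mem_multiples_iff, smul_eq_mul, dvd_iff_exists_eq_mul_left,
      eq_comm (a := w _)]

/-- Lemma 5.4: an element of ℕ³ with exactly one zero coordinate belongs to H_{3t}
if and only if its two nonzero coordinates are multiples of 3t. -/
theorem stmt12 (t : ℕ) (ht : 1 ≤ t) (w : Fin 3 → ℕ) (i j k : Fin 3)
    (hij : i ≠ j) (hik : i ≠ k) (hjk : j ≠ k)
    (hwk : w k = 0) (hwi : 0 < w i) (hwj : 0 < w j) :
    w ∈ HH t ↔ (3 * t ∣ w i ∧ 3 * t ∣ w j) := by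
  rw [stmt12_general hwk, forall_fin_three_iff_of_ne hij hik hjk, hwk]
  simp only [dvd_zero, and_true]
end

section
/- The additive submonoid of ℕ³ generated by (3,0,0), (0,3,0), (0,0,3) and (1,1,1) equals the set {(a₀,a₁,a₂) ∈ ℕ³ : 3 ∣ a₀+a₁+a₂ and 3 ∣ a₁+2a₂}. -/
/-!
Since `2 ≡ -1` modulo `3`, the two divisibility conditions say that the three coordinates of `a` are
congruent to each other modulo `3`. If all coordinates of a vector have the same remainder `r`
modulo `d`, division with remainder in each coordinate writes it as a combination of the vectors
`d • eᵢ` plus `r` times the all-ones vector.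
-/

/-- The additive submonoid of `ι → ℕ` consisting of the vectors whose coordinates are all congruent
to each other modulo `d`. For `ι = Fin 3` and `d = 3` these are the exponents of the monomials
invariant under the extended group `Λ̄`. -/
def congruentCoords (ι : Type*) (d : ℕ) : AddSubmonoid (ι → ℕ) where
  carrier := {a | ∀ i j, a i ≡ a j [MOD d]}
  zero_mem' _ _ := Nat.ModEq.rfl
  add_mem' ha hb i j := (ha i j).add (hb i j)

namespace congruentCoords

variable {ι : Type*} {d : ℕ}

theorem mem_of_forall_modEq {a : ι → ℕ} {c : ℕ} (h : ∀ i, a i ≡ c [MOD d]) :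
    a ∈ congruentCoords ι d :=
  fun i j => (h i).trans (h j).symm

theorem one_mem : 1 ∈ congruentCoords ι d :=
  fun _ _ => Nat.ModEq.rfl

theorem single_mem [DecidableEq ι] (k : ι) : Pi.single k d ∈ congruentCoords ι d := by
  refine mem_of_forall_modEq (c := 0) fun i => ?_
  obtain rfl | hik := eq_or_ne i k
  · rw [Pi.single_eq_same]
    exact Nat.modEq_zero_iff_dvd.2 dvd_rfl
  · rw [Pi.single_eq_of_ne hik]

theorem sum_div_nsmul_single_add_mod_nsmul_one [Fintype ι] [DecidableEq ι] {a : ι → ℕ}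
    (ha : a ∈ congruentCoords ι d) (k : ι) :
    ∑ i, (a i / d) • Pi.single i d + (a k % d) • 1 = a := by
  have sum_eq : ∑ i, (a i / d) • (Pi.single i d : ι → ℕ) = fun i => a i / d * d := by
    simp only [← Pi.single_smul, smul_eq_mul]
    exact Finset.univ_sum_single fun i => a i / d * d
  funext j
  calc (∑ i, (a i / d) • (Pi.single i d : ι → ℕ) + (a k % d) • 1) j
      = a j / d * d + a k % d := by rw [sum_eq]; simp
    _ = a j / d * d + a j % d := by rw [ha k j]
    _ = a j := Nat.div_add_mod' (a j) d

theorem closure_insert_one_range_single [Finite ι] [DecidableEq ι] :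
    AddSubmonoid.closure (insert 1 (Set.range fun i : ι => Pi.single i d)) =
      congruentCoords ι d := by
  apply le_antisymm
  · rw [AddSubmonoid.closure_le, Set.insert_subset_iff, Set.range_subset_iff]
    exact ⟨one_mem, single_mem⟩
  · intro a ha
    cases nonempty_fintype ι
    obtain _ | ⟨⟨k⟩⟩ := isEmpty_or_nonempty ι
    · rw [Subsingleton.elim a 0]
      exact zero_mem _
    · rw [← sum_div_nsmul_single_add_mod_nsmul_one ha k]
      refine add_mem (sum_mem fun i _ => nsmul_mem ?_ _) (nsmul_mem ?_ _)
      · exact AddSubmonoid.subset_closure (Set.mem_insert_of_mem _ (Set.mem_range_self i))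
      · exact AddSubmonoid.subset_closure (Set.mem_insert _ _)

theorem mem_fin_three_iff {a : Fin 3 → ℕ} :
    a ∈ congruentCoords (Fin 3) d ↔ a 0 ≡ a 2 [MOD d] ∧ a 1 ≡ a 2 [MOD d] := by
  refine ⟨fun ha => ⟨ha 0 2, ha 1 2⟩, fun ⟨h₀, h₁⟩ => mem_of_forall_modEq (c := a 2) fun i => ?_⟩
  fin_cases i
  exacts [h₀, h₁, Nat.ModEq.rfl]

end congruentCoords

theorem range_fin_three {α : Type*} (f : Fin 3 → α) : Set.range f = {f 0, f 1, f 2} := by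
  ext x
  simp [Fin.exists_fin_succ, eq_comm]

theorem three_dvd_add_two_mul_iff {m n : ℕ} : 3 ∣ m + 2 * n ↔ m ≡ n [MOD 3] := by
  rw [Nat.ModEq]
  omega

theorem three_dvd_add_add_and_dvd_add_two_mul_iff {l m n : ℕ} :
    3 ∣ l + m + n ∧ 3 ∣ m + 2 * n ↔ l ≡ n [MOD 3] ∧ m ≡ n [MOD 3] := by
  rw [three_dvd_add_two_mul_iff, and_congr_left_iff]
  intro hmn
  have sum_modEq : l + m + n ≡ l + 2 * n [MOD 3] := by
    simpa only [two_mul, add_assoc] using (hmn.add_right n).add_left l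
  rw [sum_modEq.dvd_iff dvd_rfl, three_dvd_add_two_mul_iff]

/-- Example 3.2: the additive submonoid of ℕ³ generated by (3,0,0), (0,3,0), (0,0,3)
and (1,1,1) is exactly {(a₀,a₁,a₂) : 3 ∣ a₀+a₁+a₂ and 3 ∣ a₁+2a₂}. -/
theorem stmt19 :
    (AddSubmonoid.closure
        {Pi.single 0 3, Pi.single 1 3, Pi.single 2 3,
          (fun _ => 1 : Fin 3 → ℕ)} : Set (Fin 3 → ℕ)) =
      {a : Fin 3 → ℕ | 3 ∣ a 0 + a 1 + a 2 ∧ 3 ∣ a 1 + 2 * a 2} := by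
  have generators_eq : ({Pi.single 0 3, Pi.single 1 3, Pi.single 2 3, fun _ => 1} :
      Set (Fin 3 → ℕ)) = insert 1 (Set.range fun i => Pi.single i 3) := by
    rw [range_fin_three, Set.insert_comm 1, Set.insert_comm 1, Set.pair_comm 1]
    rfl
  rw [generators_eq, congruentCoords.closure_insert_one_range_single]
  ext a
  rw [SetLike.mem_coe, congruentCoords.mem_fin_three_iff, Set.mem_ofPred_eq,
    three_dvd_add_add_and_dvd_add_two_mul_iff]
end
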